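/- arXiv:2007.02094 — 2 statements merged into one kernel-verified Lean document; each statement's English description precedes it below -/
import Mathlib

section
/- Fix k ∈ ℕ* and assume condition (N). Let G = (G_i) ∈ (L¹₊(Ω))^p be given, and let g, h ∈ (L¹₊(Ω))^p satisfy 0 ≤ g_i ≤ h_i in Ω, the two transport systems v_i·∇h_i = G_i − Σ_{j,l,m} Γ_{ij}^{lm} (h_i/(1 + h_i/k)) (g_j/(1 + g_j/k)) and v_i·∇g_i = G_i − Σ_{j,l,m} Γ_{ij}^{lm} (g_i/(1 + g_i/k)) (h_j/(1 + h_j/k)) in Ω (in the mild sense along characteristics), together with equal ingoing boundary values (h_i − g_i)(z_i^+(z)) = 0 for a.a. z ∈ Ω, 1 ≤ i ≤ p. Then g = h a.e. in Ω. -/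
open MeasureTheory Real Set Filter Topology
open scoped InnerProductSpace ENNReal

noncomputable section

abbrev E2 := EuclideanSpace ℝ (Fin 2)

/-- The `v`-ingoing part of the boundary of `Ω`, where `n` is the unit inward normal field. -/
def bdryIn (Ω : Set E2) (n : E2 → E2) (v : E2) : Set E2 :=
  {Z | Z ∈ frontier Ω ∧ 0 < ⟪v, n Z⟫_ℝ}

/-- The `v`-outgoing part of the boundary of `Ω`. -/
def bdryOut (Ω : Set E2) (n : E2 → E2) (v : E2) : Set E2 :=
  {Z | Z ∈ frontier Ω ∧ ⟪v, n Z⟫_ℝ < 0}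

/-- `s_i^+(z)`: backward exit time from `z` in direction `v`. -/
def sPlus (Ω : Set E2) (n : E2 → E2) (v : E2) (z : E2) : ℝ :=
  sInf {s : ℝ | 0 < s ∧ z - s • v ∈ bdryIn Ω n v}

/-- `s_i^-(z)`: forward exit time from `z` in direction `v`. -/
def sMinus (Ω : Set E2) (n : E2 → E2) (v : E2) (z : E2) : ℝ :=
  sInf {s : ℝ | 0 < s ∧ z + s • v ∈ bdryOut Ω n v}

/-- `z_i^+(z)`: the ingoing boundary point of the characteristic through `z` in direction `v`. -/
def zPlus (Ω : Set E2) (n : E2 → E2) (v : E2) (z : E2) : E2 :=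
  z - sPlus Ω n v z • v

/-- `Ω` is a bounded open strictly convex planar domain with `C¹` boundary,
with unit inward normal field `n`. -/
def GoodDomain (Ω : Set E2) (n : E2 → E2) : Prop :=
  IsOpen Ω ∧ Ω.Nonempty ∧ Bornology.IsBounded Ω ∧ StrictConvex ℝ Ω ∧
  ContinuousOn n (frontier Ω) ∧ (∀ Z ∈ frontier Ω, ‖n Z‖ = 1) ∧
  (∀ Z ∈ frontier Ω, ∃ ε > 0, ∀ t ∈ Set.Ioo (0:ℝ) ε, Z + t • n Z ∈ Ω)

/-- Nonnegativity, symmetries and conservation laws for the collision coefficients. -/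
def GammaOK {p : ℕ} (v : Fin p → E2) (Γ : Fin p → Fin p → Fin p → Fin p → ℝ) : Prop :=
  (∀ i j l m, 0 ≤ Γ i j l m) ∧
  (∀ i j l m, Γ i j l m = Γ j i l m) ∧
  (∀ i j l m, Γ i j l m = Γ l m i j) ∧
  (∀ i j l m, 0 < Γ i j l m →
    v i + v j = v l + v m ∧ ‖v i‖ ^ 2 + ‖v j‖ ^ 2 = ‖v l‖ ^ 2 + ‖v m‖ ^ 2)

/-- Condition (G): no two of the velocities are parallel. -/
def CondG {p : ℕ} (v : Fin p → E2) : Prop :=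
  ∀ i j, i ≠ j → LinearIndependent ℝ ![v i, v j]

/-- Condition (N): all velocities have positive component along some direction `n₀`. -/
def CondN {p : ℕ} (v : Fin p → E2) : Prop :=
  ∃ n0 : E2, ∀ i, 0 < ⟪v i, n0⟫_ℝ

/-- Membership in `L¹₊(Ω)`. -/
def L1plus (Ω : Set E2) (f : E2 → ℝ) : Prop :=
  IntegrableOn f Ω volume ∧ ∀ᵐ z ∂(volume.restrict Ω), 0 ≤ f z

/-- Nonnegative ingoing boundary data with finite mass and entropy inflow. -/
def GoodBdryData (Ω : Set E2) (n : E2 → E2) {p : ℕ} (v : Fin p → E2)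
    (fb : Fin p → E2 → ℝ) : Prop :=
  ∀ i, (∀ z ∈ bdryIn Ω n (v i), 0 ≤ fb i z) ∧
    IntegrableOn (fun z => ⟪v i, n z⟫_ℝ * fb i z * (1 + Real.log (fb i z)))
      (bdryIn Ω n (v i)) (μH[1] : Measure E2)

/-- The truncation `x ↦ x/(1 + x/k)`. -/
def trunc (k x : ℝ) : ℝ := x / (1 + x / k)

/-- The collision operator `Q_i(f)`. -/
def Qcol {p : ℕ} (Γ : Fin p → Fin p → Fin p → Fin p → ℝ) (f : Fin p → E2 → ℝ)
    (i : Fin p) (z : E2) : ℝ :=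
  ∑ j, ∑ l, ∑ m, Γ i j l m * (f l z * f m z - f i z * f j z)

/-- The truncated gain term `Q_i^{+k}(F)`. -/
def QplusK {p : ℕ} (k : ℝ) (Γ : Fin p → Fin p → Fin p → Fin p → ℝ)
    (F : Fin p → E2 → ℝ) (i : Fin p) (z : E2) : ℝ :=
  ∑ j, ∑ l, ∑ m, Γ i j l m * (trunc k (F l z) * trunc k (F m z))

/-- The truncated collision frequency `ν_i^k(F)`. -/
def nuK {p : ℕ} (k : ℝ) (Γ : Fin p → Fin p → Fin p → Fin p → ℝ)
    (F : Fin p → E2 → ℝ) (i : Fin p) (z : E2) : ℝ :=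
  ∑ j, ∑ l, ∑ m, Γ i j l m * (F j z / ((1 + F i z / k) * (1 + F j z / k)))

/-- A smooth mollifier supported in the ball of radius `α`. -/
def IsMollifier (α : ℝ) (μ : E2 → ℝ) : Prop :=
  ContDiff ℝ (⊤ : ℕ∞) μ ∧ (∀ x, 0 ≤ μ x) ∧ tsupport μ ⊆ Metric.ball 0 α ∧ (∫ x, μ x) = 1

/-- Convolution `(g ∗ μ)(z) = ∫ μ(z - y) g(y) dy`. -/
def convWith (μ g : E2 → ℝ) (z : E2) : ℝ := ∫ y, μ (z - y) * g y

/-- The smoothed truncated ingoing boundary data `f^k_{bi}`. -/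
def GoodTruncData (Ω : Set E2) {p : ℕ} (k : ℝ) (fkb : Fin p → E2 → ℝ) : Prop :=
  ∀ i, ContinuousOn (fkb i) (frontier Ω) ∧ ∀ z ∈ frontier Ω, 0 ≤ fkb i z ∧ fkb i z ≤ k / 2

/-- The constant `c_α`. -/
def cAlpha (Ω : Set E2) (n : E2 → E2) {p : ℕ} (v : Fin p → E2)
    (fb : Fin p → E2 → ℝ) (α : ℝ) : ℝ :=
  (1 / α) * ∑ i, ∫ z in bdryIn Ω n (v i), ⟪n z, v i⟫_ℝ * fb i z ∂(μH[1] : Measure E2)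

/-- The set `K_α`. -/
def Kalpha (Ω : Set E2) (n : E2 → E2) {p : ℕ} (v : Fin p → E2)
    (fb : Fin p → E2 → ℝ) (α : ℝ) : Set (Fin p → E2 → ℝ) :=
  {f | (∀ i, L1plus Ω (f i)) ∧ (∑ i, ∫ z in Ω, f i z) ≤ cAlpha Ω n v fb α}

/-- Right hand side of the damped, convolved, truncated equation with unknown `F` and
frozen convolved argument `f`. -/
def DampedRHS {p : ℕ} (k : ℝ) (μα : E2 → ℝ) (ext : (E2 → ℝ) → E2 → ℝ)
    (Γ : Fin p → Fin p → Fin p → Fin p → ℝ) (F f : Fin p → E2 → ℝ)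
    (i : Fin p) (z : E2) : ℝ :=
  ∑ j, ∑ l, ∑ m, Γ i j l m *
    (trunc k (F l z) * trunc k (convWith μα (ext (f m)) z) -
     trunc k (F i z) * trunc k (convWith μα (ext (f j)) z))

/-- `F` is a mild (exponential-form) solution of the damped, convolved, truncated problem
`α F_i + v_i·∇F_i = DampedRHS`, with ingoing boundary data `fkb`. -/
def IsMildDamped (Ω : Set E2) (n : E2 → E2) {p : ℕ} (v : Fin p → E2)
    (k α : ℝ) (μα : E2 → ℝ) (ext : (E2 → ℝ) → E2 → ℝ)
    (Γ : Fin p → Fin p → Fin p → Fin p → ℝ) (fkb : Fin p → E2 → ℝ)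
    (F f : Fin p → E2 → ℝ) : Prop :=
  ∀ i, ∀ᵐ z ∂(volume.restrict Ω),
    F i z = fkb i (zPlus Ω n (v i) z) * Real.exp (-(α * sPlus Ω n (v i) z)) +
      ∫ s in (0:ℝ)..(sPlus Ω n (v i) z),
        Real.exp (α * (s - sPlus Ω n (v i) z)) *
          DampedRHS k μα ext Γ F f i (zPlus Ω n (v i) z + s • v i)

/-- `F` is a mild solution of the truncated problem
`v_i·∇F_i = Q_i^{+k}(F) − F_i ν_i^k(F)` with ingoing boundary data `fkb`,
the mild form holding at every point of `Ω`. -/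
def IsMildTrunc (Ω : Set E2) (n : E2 → E2) {p : ℕ} (v : Fin p → E2)
    (k : ℝ) (Γ : Fin p → Fin p → Fin p → Fin p → ℝ) (fkb : Fin p → E2 → ℝ)
    (F : Fin p → E2 → ℝ) : Prop :=
  ∀ i, ∀ z ∈ Ω,
    F i z = fkb i (zPlus Ω n (v i) z) +
      ∫ s in (0:ℝ)..(sPlus Ω n (v i) z),
        (QplusK k Γ F i (zPlus Ω n (v i) z + s • v i) -
         F i (zPlus Ω n (v i) z + s • v i) * nuK k Γ F i (zPlus Ω n (v i) z + s • v i))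

/-!
The difference `d i = h i - g i ≥ 0` vanishes on the ingoing boundary, so it is the integral along
backward characteristics of `S i = L i g h - L i h g`, where `L i x y` is the truncated loss
`∑ j l m, Γ i j l m * (trunc k (x i) * trunc k (y j))`. Extended by transport to the whole plane,
`d i` stays nonnegative. Testing `v i · ∇d i = S i` against `exp (-⟪n₀, ·⟫)`, where `n₀` is given by
condition (N), yields
`⟪v i, n₀⟫ * ∫ exp (-⟪n₀, z⟫) * d i z = ∫ exp (-⟪n₀, z⟫) * S i z`.
By the symmetry `Γ i j l m = Γ j i l m` the right-hand sides sum to zero over `i`, while every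
left-hand side is nonnegative; hence `d i = 0` almost everywhere.

Points whose backward characteristic misses the ingoing boundary need a separate remark: there
`zPlus` is the point itself, so `g i = h i` by the boundary condition, and dropping such points from
`S i` only lowers the sum over `i`.
-/

/-- The integral of `S` along the backward ray `z - s • v`, `0 < s`: the solution `f` of the
transport equation `v · ∇f = S` in the whole space which vanishes far upstream. -/
def rayIntegral {E : Type*} [AddCommGroup E] [Module ℝ E] (v : E) (S : E → ℝ) (z : E) : ℝ :=
  ∫ s in Ioi (0 : ℝ), S (z - s • v)

lemma rayIntegral_sub_smul {E : Type*} [AddCommGroup E] [Module ℝ E] (v : E) (S : E → ℝ)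
    (z : E) (t : ℝ) : rayIntegral v S (z - t • v) = ∫ s in Ioi t, S (z - s • v) := by
  have hpre : (t + ·) ⁻¹' Ioi t = Ioi (0 : ℝ) := by simp
  rw [← (measurePreserving_add_left volume t).setIntegral_preimage_emb
    (measurableEmbedding_addLeft t), hpre]
  simp only [rayIntegral, add_smul, sub_sub]

lemma setIntegral_Ioi_nonneg_of_ae_mem_nonneg {r : ℝ → ℝ} {A : Set ℝ} {a : ℝ} (hA : IsOpen A)
    (hr : IntegrableOn r (Ioi a)) (hr0 : ∀ s ∉ A, r s = 0)
    (hpos : ∀ᵐ t, t ∈ A → 0 ≤ ∫ s in Ioi t, r s) : 0 ≤ ∫ s in Ioi a, r s := by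
  let P : ℝ → ℝ := fun t => ∫ s in Ioi t, r s
  have hP : ContinuousOn P (Ici a) := hr.continuousOn_Ici_primitive_Ioi
  have hsub : A ∩ Ioi a ⊆ Ici a := inter_subset_right.trans Ioi_subset_Ici_self
  have hmaps : MapsTo P (A ∩ Ioi a) (Ici 0) := by
    have hopen : IsOpen ((A ∩ Ioi a) ∩ P ⁻¹' Iio 0) :=
      (hP.mono hsub).isOpen_inter_preimage (hA.inter isOpen_Ioi) isOpen_Iio
    have hnull : volume ((A ∩ Ioi a) ∩ P ⁻¹' Iio 0) = 0 :=
      measure_mono_null (t := {t | ¬(t ∈ A → 0 ≤ P t)})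
        (fun t ht hnonneg => ht.2.not_ge (hnonneg ht.1.1)) (ae_iff.1 hpos)
    intro t ht
    by_contra hneg
    have hlt : P t < 0 := not_le.1 hneg
    exact (hopen.eq_empty_of_measure_zero hnull).le ⟨ht, hlt⟩
  rcases (A ∩ Ioi a).eq_empty_or_nonempty with hempty | hne
  · refine (setIntegral_eq_zero_of_forall_eq_zero fun s hs => hr0 s fun hsA => ?_).ge
    exact hempty.le ⟨hsA, hs⟩
  -- `P` is constant from `a` to the first point `b` of `A`, where it is a limit of values on `A`.
  set b := sInf (A ∩ Ioi a)
  have hab : a ≤ b := le_csInf hne hsub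
  have hbdd : BddBelow (A ∩ Ioi a) := ⟨a, hsub⟩
  have hPb : 0 ≤ P b := by
    simpa only [closure_Ici, mem_Ici] using
      ((hP b hab).mono hsub).mem_closure (csInf_mem_closure hne hbdd) hmaps
  have hgap : P a - P b = 0 := by
    rw [intervalIntegral.integral_Ioi_sub_Ioi hr hab, intervalIntegral.integral_of_le hab,
      integral_Ioc_eq_integral_Ioo]
    refine setIntegral_eq_zero_of_forall_eq_zero fun s hs => hr0 s fun hsA => ?_
    exact hs.2.not_ge (csInf_le hbdd ⟨hsA, hs.1⟩)
  linarith

lemma exp_neg_mul_sub_smul {E : Type*} [AddCommGroup E] [Module ℝ E] [TopologicalSpace E]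
    (ℓ : E →L[ℝ] ℝ) (v : E) (S : E → ℝ) (z : E) (s : ℝ) :
    exp (-ℓ (z - s • v)) * S (z - s • v) * exp (-ℓ v * s) = exp (-ℓ z) * S (z - s • v) := by
  rw [mul_right_comm, ← exp_add, map_sub, map_smul, smul_eq_mul]
  ring_nf

section RayIntegral

variable {E : Type*} [NormedAddCommGroup E] [NormedSpace ℝ E] [SecondCountableTopology E]
  [MeasurableSpace E] [BorelSpace E] {μ : Measure E} [SFinite μ] [μ.IsAddRightInvariant]

lemma measurePreserving_prod_sub_smul (v : E) (ν : Measure ℝ) [SFinite ν] :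
    MeasurePreserving (fun q : E × ℝ => (q.1 - q.2 • v, q.2)) (μ.prod ν) (μ.prod ν) := by
  have hskew : MeasurePreserving (fun q : ℝ × E => (q.1, q.2 - q.1 • v)) (ν.prod μ) (ν.prod μ) :=
    (MeasurePreserving.id ν).skew_product (g := fun s z => z - s • v) (by fun_prop)
      (ae_of_all _ fun s => by
        simpa only [sub_eq_add_neg] using map_add_right_eq_self μ (-(s • v)))
  exact (Measure.measurePreserving_swap.comp hskew).comp Measure.measurePreserving_swap

lemma ae_ae_sub_smul {P : E → Prop} (hP : ∀ᵐ z ∂μ, P z) (v : E) :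
    ∀ᵐ z ∂μ, ∀ᵐ s : ℝ, P (z - s • v) :=
  Measure.ae_ae_of_ae_prod <| (measurePreserving_prod_sub_smul v volume).quasiMeasurePreserving.ae
    (Measure.quasiMeasurePreserving_fst.ae hP)

variable {ℓ : E →L[ℝ] ℝ} {v : E} {S T : E → ℝ}

lemma integrable_prod_exp_neg_mul_ray (hv : 0 < ℓ v)
    (hS : Integrable (fun z => exp (-ℓ z) * S z) μ) :
    Integrable (fun q : E × ℝ => exp (-ℓ q.1) * S (q.1 - q.2 • v))
      (μ.prod (volume.restrict (Ioi 0))) := by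
  have hexp : IntegrableOn (fun s => exp (-ℓ v * s)) (Ioi 0) :=
    integrableOn_exp_mul_Ioi (neg_neg_of_pos hv) 0
  refine ((measurePreserving_prod_sub_smul v _).integrable_comp_of_integrable
    (hS.mul_prod hexp)).congr (ae_of_all _ fun q => ?_)
  exact exp_neg_mul_sub_smul ℓ v S q.1 q.2

lemma ae_integrableOn_ray (hv : 0 < ℓ v) (hS : Integrable (fun z => exp (-ℓ z) * S z) μ) :
    ∀ᵐ z ∂μ, IntegrableOn (fun s : ℝ => S (z - s • v)) (Ioi 0) := by
  filter_upwards [(integrable_prod_exp_neg_mul_ray hv hS).prod_right_ae] with z hz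
  exact (integrable_const_mul_iff (exp_pos _).ne'.isUnit _).1 hz

lemma ae_rayIntegral_sub (hv : 0 < ℓ v) (hS : Integrable (fun z => exp (-ℓ z) * S z) μ)
    (hT : Integrable (fun z => exp (-ℓ z) * T z) μ) :
    ∀ᵐ z ∂μ, rayIntegral v (S - T) z = rayIntegral v S z - rayIntegral v T z := by
  filter_upwards [ae_integrableOn_ray hv hS, ae_integrableOn_ray hv hT] with z hzS hzT
  exact integral_sub hzS hzT

lemma integrable_exp_neg_mul_rayIntegral (hv : 0 < ℓ v)
    (hS : Integrable (fun z => exp (-ℓ z) * S z) μ) :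
    Integrable (fun z => exp (-ℓ z) * rayIntegral v S z) μ := by
  simpa only [integral_const_mul] using! (integrable_prod_exp_neg_mul_ray hv hS).integral_prod_left

-- The weak form of `v · ∇f = S` tested against `exp (-ℓ ·)`, whose `v`-derivative is `-ℓ v` times
-- itself.
lemma integral_exp_neg_mul_rayIntegral (hv : 0 < ℓ v)
    (hS : Integrable (fun z => exp (-ℓ z) * S z) μ) :
    ℓ v * ∫ z, exp (-ℓ z) * rayIntegral v S z ∂μ = ∫ z, exp (-ℓ z) * S z ∂μ := by
  have hexp : ∫ s in Ioi (0 : ℝ), exp (-ℓ v * s) = 1 / ℓ v := by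
    rw [integral_exp_mul_Ioi (neg_neg_of_pos hv), mul_zero, exp_zero, neg_div_neg_eq]
  let ν : Measure ℝ := volume.restrict (Ioi 0)
  have hprod := hS.mul_prod (integrableOn_exp_mul_Ioi (neg_neg_of_pos hv) 0)
  have hshear := measurePreserving_prod_sub_smul (μ := μ) v ν
  have hflat : ∫ z, exp (-ℓ z) * rayIntegral v S z ∂μ
      = (∫ z, exp (-ℓ z) * S z ∂μ) * (1 / ℓ v) := calc
    _ = ∫ z, ∫ s, exp (-ℓ z) * S (z - s • v) ∂ν ∂μ := by
      simp only [rayIntegral, integral_const_mul, ν]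
    _ = ∫ q, exp (-ℓ q.1) * S (q.1 - q.2 • v) ∂μ.prod ν :=
      (integral_prod _ (integrable_prod_exp_neg_mul_ray hv hS)).symm
    _ = ∫ q, exp (-ℓ q.1) * S q.1 * exp (-ℓ v * q.2) ∂μ.prod ν := by
      conv_rhs => rw [← hshear.map_eq]
      rw [integral_map hshear.aemeasurable (by rw [hshear.map_eq]; exact hprod.1)]
      simp only [exp_neg_mul_sub_smul]
    _ = _ := by
      rw [integral_prod_mul (fun z => exp (-ℓ z) * S z) (fun s => exp (-ℓ v * s)), hexp]
  rw [hflat]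
  field_simp

-- Off the open set the ray integral is constant along characteristics, so it inherits its sign from
-- the traces on the boundary.
lemma ae_rayIntegral_nonneg {U : Set E} (hU : IsOpen U) (hv : 0 < ℓ v)
    (hS : Integrable (fun z => exp (-ℓ z) * S z) μ) (hS0 : ∀ z ∉ U, S z = 0)
    (hpos : ∀ᵐ z ∂μ, z ∈ U → 0 ≤ rayIntegral v S z) : ∀ᵐ z ∂μ, 0 ≤ rayIntegral v S z := by
  filter_upwards [ae_ae_sub_smul hpos v, ae_integrableOn_ray hv hS] with z hz hzS
  refine setIntegral_Ioi_nonneg_of_ae_mem_nonneg (A := {s | z - s • v ∈ U})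
    (hU.preimage (by fun_prop)) hzS (fun s hs => hS0 _ hs) ?_
  simpa only [rayIntegral_sub_smul, mem_ofPred_eq] using hz

theorem ae_rayIntegral_eq_zero_of_sum_nonpos {ι : Type*} [Fintype ι] {U : Set E} (hU : IsOpen U)
    {v : ι → E} {S : ι → E → ℝ} (hv : ∀ i, 0 < ℓ (v i))
    (hS : ∀ i, Integrable (fun z => exp (-ℓ z) * S i z) μ) (hS0 : ∀ i, ∀ z ∉ U, S i z = 0)
    (hpos : ∀ i, ∀ᵐ z ∂μ, z ∈ U → 0 ≤ rayIntegral (v i) (S i) z)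
    (hsum : ∀ᵐ z ∂μ, ∑ i, S i z ≤ 0) (i : ι) : ∀ᵐ z ∂μ, rayIntegral (v i) (S i) z = 0 := by
  have hnonneg i : 0 ≤ᵐ[μ] fun z => exp (-ℓ z) * rayIntegral (v i) (S i) z := by
    filter_upwards [ae_rayIntegral_nonneg hU (hv i) (hS i) (hS0 i) (hpos i)] with z hz
    exact mul_nonneg (exp_pos _).le hz
  have hterm i : 0 ≤ ∫ z, exp (-ℓ z) * S i z ∂μ :=
    integral_exp_neg_mul_rayIntegral (hv i) (hS i) ▸
      mul_nonneg (hv i).le (integral_nonneg_of_ae (hnonneg i))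
  have htotal : ∑ i, ∫ z, exp (-ℓ z) * S i z ∂μ ≤ 0 := by
    rw [← integral_finsetSum _ fun i _ => hS i]
    refine integral_nonpos_of_ae ?_
    filter_upwards [hsum] with z hz
    rw [← Finset.mul_sum]
    exact mul_nonpos_of_nonneg_of_nonpos (exp_pos _).le hz
  have hzero : ∫ z, exp (-ℓ z) * S i z ∂μ = 0 :=
    (Finset.sum_eq_zero_iff_of_nonneg fun i _ => hterm i).1
      (htotal.antisymm (Finset.sum_nonneg fun i _ => hterm i)) i (Finset.mem_univ i)
  rw [← integral_exp_neg_mul_rayIntegral (hv i) (hS i), mul_eq_zero,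
    or_iff_right (hv i).ne', integral_eq_zero_iff_of_nonneg_ae (hnonneg i)
      (integrable_exp_neg_mul_rayIntegral (hv i) (hS i))] at hzero
  filter_upwards [hzero] with z hz
  exact (mul_eq_zero.1 hz).resolve_left (exp_pos _).ne'

end RayIntegral

lemma measurableSet_image_of_isLocallyClosed {X Y : Type*} [TopologicalSpace X]
    [LocallyCompactSpace X] [SecondCountableTopology X] [TopologicalSpace Y] [T2Space Y]
    [MeasurableSpace Y] [BorelSpace Y] {f : X → Y} (hf : Continuous f) {s : Set X}
    (hs : IsLocallyClosed s) : MeasurableSet (f '' s) := by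
  have := hs.locallyCompactSpace
  obtain ⟨K, hK, hKs⟩ := (isSigmaCompact_iff_sigmaCompactSpace.2 inferInstance :
    IsSigmaCompact s).image hf
  exact hKs ▸ MeasurableSet.iUnion fun m => (hK m).measurableSet

lemma sub_smul_mem_of_sub_smul_mem_closure {E : Type*} [AddCommGroup E] [Module ℝ E]
    [TopologicalSpace E] [IsTopologicalAddGroup E] [ContinuousConstSMul ℝ E] {U : Set E}
    (hU : IsOpen U) (hconv : Convex ℝ U) {v z : E} (hz : z ∈ U) {s t : ℝ}
    (ht : z - t • v ∈ closure U) (hs : 0 ≤ s) (hst : s < t) : z - s • v ∈ U := by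
  have ht0 : 0 < t := hs.trans_lt hst
  have hmem := hconv.add_smul_sub_mem_interior' ht (hU.interior_eq.symm ▸ hz)
    (t := 1 - s / t) ⟨by rwa [sub_pos, div_lt_one ht0], sub_le_self 1 (by positivity)⟩
  rw [hU.interior_eq] at hmem
  convert hmem using 1
  match_scalars <;> field_simp <;> ring

section InflowDomain

/-- The points of `Ω` whose backward characteristic in direction `v` reaches the ingoing boundary.
The set `{s | 0 < s ∧ z - s • v ∈ bdryIn Ω n v}` defining `sPlus Ω n v z` is nonempty exactly for
these points `z` of `Ω`; at the others `sPlus Ω n v z` is the junk value `0`. -/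
def inflowDomain (Ω : Set E2) (n : E2 → E2) (v : E2) : Set E2 :=
  {z | z ∈ Ω ∧ ∃ s : ℝ, 0 < s ∧ z - s • v ∈ bdryIn Ω n v}

variable {Ω : Set E2} {n : E2 → E2} {v z : E2} {s : ℝ}

lemma isLocallyClosed_bdryIn (hn : ContinuousOn n (frontier Ω)) (v : E2) :
    IsLocallyClosed (bdryIn Ω n v) := by
  obtain ⟨u, hu, hur⟩ :=
    continuousOn_iff'.1 ((continuousOn_const (c := v)).inner (𝕜 := ℝ) hn) (Ioi 0) isOpen_Ioi
  have hbdry : bdryIn Ω n v = u ∩ frontier Ω := by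
    rw [← hur, inter_comm]
    rfl
  exact hbdry ▸ hu.isLocallyClosed.inter isClosed_frontier.isLocallyClosed

lemma measurableSet_inflowDomain (hΩ : IsOpen Ω) (hn : ContinuousOn n (frontier Ω)) (v : E2) :
    MeasurableSet (inflowDomain Ω n v) := by
  have himage : inflowDomain Ω n v
      = Ω ∩ (fun q : E2 × ℝ => q.1 + q.2 • v) '' (bdryIn Ω n v ×ˢ Ioi 0) := by
    ext z
    refine and_congr_right fun _ => ⟨fun ⟨s, hs, hmem⟩ => ?_, ?_⟩
    · exact ⟨(z - s • v, s), ⟨hmem, hs⟩, sub_add_cancel _ _⟩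
    · rintro ⟨⟨Z, s⟩, ⟨hZ, hs⟩, rfl⟩
      exact ⟨s, hs, by simpa using hZ⟩
  have hclosed : IsLocallyClosed (bdryIn Ω n v ×ˢ Ioi (0 : ℝ)) :=
    ((isLocallyClosed_bdryIn hn v).preimage continuous_fst).inter
      (isOpen_Ioi.isLocallyClosed.preimage continuous_snd)
  rw [himage]
  exact hΩ.measurableSet.inter (measurableSet_image_of_isLocallyClosed (by fun_prop) hclosed)

lemma sPlus_eq_zero_of_notMem_inflowDomain (hz : z ∈ Ω) (hzv : z ∉ inflowDomain Ω n v) :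
    sPlus Ω n v z = 0 := by
  have hempty : {s : ℝ | 0 < s ∧ z - s • v ∈ bdryIn Ω n v} = ∅ :=
    eq_empty_of_forall_notMem fun s hs => hzv ⟨hz, s, hs⟩
  rw [sPlus, hempty, Real.sInf_empty]

lemma zPlus_eq_self_of_notMem_inflowDomain (hz : z ∈ Ω) (hzv : z ∉ inflowDomain Ω n v) :
    zPlus Ω n v z = z := by
  rw [zPlus, sPlus_eq_zero_of_notMem_inflowDomain hz hzv, zero_smul, sub_zero]

lemma sPlus_nonneg : 0 ≤ sPlus Ω n v z :=
  Real.sInf_nonneg fun _ hs => hs.1.le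

lemma sPlus_eq_of_sub_smul_mem_bdryIn (hΩ : IsOpen Ω) (hconv : Convex ℝ Ω) (hz : z ∈ Ω)
    (hs : 0 < s) (hmem : z - s • v ∈ bdryIn Ω n v) : sPlus Ω n v z = s := by
  have hnotLt {t₁ t₂ : ℝ} (ht₁ : 0 < t₁) (h₁ : z - t₁ • v ∈ bdryIn Ω n v)
      (h₂ : z - t₂ • v ∈ bdryIn Ω n v) : ¬ t₁ < t₂ := fun hlt =>
    (hΩ.frontier_eq ▸ h₁.1).2 <| sub_smul_mem_of_sub_smul_mem_closure hΩ hconv hz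
      (frontier_subset_closure h₂.1) ht₁.le hlt
  have hsingleton : {s : ℝ | 0 < s ∧ z - s • v ∈ bdryIn Ω n v} = {s} :=
    eq_singleton_iff_unique_mem.2 ⟨⟨hs, hmem⟩, fun t ht =>
      le_antisymm (not_lt.1 (hnotLt hs hmem ht.2)) (not_lt.1 (hnotLt ht.1 ht.2 hmem))⟩
  rw [sPlus, hsingleton, csInf_singleton]

lemma sub_smul_mem_inflowDomain_iff (hΩ : IsOpen Ω) (hconv : Convex ℝ Ω) (hz : z ∈ Ω)
    (hs : 0 < s) : z - s • v ∈ inflowDomain Ω n v ↔ s < sPlus Ω n v z := by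
  constructor
  · rintro ⟨-, t, ht, hmem⟩
    rw [sub_sub, ← add_smul] at hmem
    rw [sPlus_eq_of_sub_smul_mem_bdryIn hΩ hconv hz (add_pos hs ht) hmem]
    exact lt_add_of_pos_right s ht
  · intro hlt
    have hzv : z ∈ inflowDomain Ω n v := by
      by_contra hzv
      exact (hs.trans hlt).ne' (sPlus_eq_zero_of_notMem_inflowDomain hz hzv)
    obtain ⟨-, t, ht, hmem⟩ := hzv
    rw [sPlus_eq_of_sub_smul_mem_bdryIn hΩ hconv hz ht hmem] at hlt
    refine ⟨sub_smul_mem_of_sub_smul_mem_closure hΩ hconv hz (frontier_subset_closure hmem.1)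
      hs.le hlt, t - s, sub_pos.2 hlt, ?_⟩
    rwa [sub_sub, ← add_smul, add_sub_cancel]

lemma rayIntegral_indicator_inflowDomain (hΩ : IsOpen Ω) (hconv : Convex ℝ Ω) (hz : z ∈ Ω)
    (F : E2 → ℝ) : rayIntegral v ((inflowDomain Ω n v).indicator F) z =
      ∫ s in (0 : ℝ)..sPlus Ω n v z, F (zPlus Ω n v z + s • v) := by
  have hreflect (s : ℝ) : zPlus Ω n v z + s • v = z - (sPlus Ω n v z - s) • v := by
    rw [zPlus, sub_smul, sub_add]
  have hind : EqOn (fun s => (inflowDomain Ω n v).indicator F (z - s • v))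
      ((Iio (sPlus Ω n v z)).indicator fun s => F (z - s • v)) (Ioi 0) := fun s hs => by
    simp only [indicator, sub_smul_mem_inflowDomain_iff hΩ hconv hz hs, mem_Iio]
  simp only [hreflect]
  rw [intervalIntegral.integral_comp_sub_left (fun s => F (z - s • v)), sub_self, sub_zero,
    intervalIntegral.integral_of_le sPlus_nonneg, integral_Ioc_eq_integral_Ioo, rayIntegral,
    setIntegral_congr_fun measurableSet_Ioi hind, setIntegral_indicator measurableSet_Iio,
    Ioi_inter_Iio]

end InflowDomain

section MildSolution

/-- `f` is a mild solution of `v · ∇f = Q` in `Ω`: for almost every `z`, the equation holds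
integrated along the characteristic from the ingoing boundary point `zPlus Ω n v z` to `z`. -/
def IsMildSolution (Ω : Set E2) (n : E2 → E2) (v : E2) (f Q : E2 → ℝ) : Prop :=
  ∀ᵐ z ∂(volume.restrict Ω),
    f z = f (zPlus Ω n v z) + ∫ s in (0 : ℝ)..sPlus Ω n v z, Q (zPlus Ω n v z + s • v)

lemma integrable_exp_neg_mul_indicator {E : Type*} [NormedAddCommGroup E] [NormedSpace ℝ E]
    [ProperSpace E] [MeasurableSpace E] [BorelSpace E] {μ : Measure E} {U A : Set E} {Q : E → ℝ}
    (hU : Bornology.IsBounded U) (hA : MeasurableSet A) (hAU : A ⊆ U) (hQ : IntegrableOn Q U μ)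
    (ℓ : E →L[ℝ] ℝ) : Integrable (fun z => exp (-ℓ z) * A.indicator Q z) μ := by
  obtain ⟨C, hC⟩ := hU.isCompact_closure.exists_bound_of_continuousOn
    (f := fun z => exp (-ℓ z)) (by fun_prop)
  have hprod : IntegrableOn (fun z => exp (-ℓ z) * Q z) A μ :=
    (hQ.mono_set hAU).bdd_mul (c := C) (by fun_prop)
      ((ae_restrict_iff' hA).2 (ae_of_all _ fun z hz => hC z (subset_closure (hAU hz))))
  exact (hprod.integrable_indicator hA).congr (ae_of_all _ fun _ => indicator_mul_right A _ Q)

lemma ae_sub_eq_rayIntegral {Ω : Set E2} {n : E2 → E2} {v : E2} {f₁ f₂ Q₁ Q₂ : E2 → ℝ}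
    (hΩ : IsOpen Ω) (hb : Bornology.IsBounded Ω) (hconv : Convex ℝ Ω)
    (hn : ContinuousOn n (frontier Ω)) {ℓ : E2 →L[ℝ] ℝ} (hv : 0 < ℓ v)
    (hQ₁ : IntegrableOn Q₁ Ω) (hQ₂ : IntegrableOn Q₂ Ω)
    (hf₁ : IsMildSolution Ω n v f₁ Q₁) (hf₂ : IsMildSolution Ω n v f₂ Q₂)
    (hbdry : ∀ᵐ z ∂(volume.restrict Ω), f₁ (zPlus Ω n v z) = f₂ (zPlus Ω n v z)) :
    ∀ᵐ z ∂(volume.restrict Ω),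
      f₁ z - f₂ z = rayIntegral v ((inflowDomain Ω n v).indicator (Q₁ - Q₂)) z := by
  have hmeas := measurableSet_inflowDomain hΩ hn v
  have hsub : inflowDomain Ω n v ⊆ Ω := fun _ hz => hz.1
  filter_upwards [hf₁, hf₂, hbdry, ae_restrict_mem hΩ.measurableSet,
    ae_restrict_of_ae (ae_rayIntegral_sub hv
      (integrable_exp_neg_mul_indicator hb hmeas hsub hQ₁ ℓ)
      (integrable_exp_neg_mul_indicator hb hmeas hsub hQ₂ ℓ))] with z h₁ h₂ hz₀ hz hray
  rw [indicator_sub', hray, rayIntegral_indicator_inflowDomain hΩ hconv hz,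
    rayIntegral_indicator_inflowDomain hΩ hconv hz, h₁, h₂, hz₀, add_sub_add_left_eq_sub]

theorem ae_eq_of_isMildSolution_of_sum_nonpos {ι : Type*} [Fintype ι] {Ω : Set E2} {n : E2 → E2}
    {v : ι → E2} {f₁ f₂ Q₁ Q₂ : ι → E2 → ℝ} (hΩ : IsOpen Ω) (hb : Bornology.IsBounded Ω)
    (hconv : Convex ℝ Ω) (hn : ContinuousOn n (frontier Ω)) (hN : ∃ n₀ : E2, ∀ i, 0 < ⟪v i, n₀⟫_ℝ)
    (hQ₁ : ∀ i, IntegrableOn (Q₁ i) Ω) (hQ₂ : ∀ i, IntegrableOn (Q₂ i) Ω)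
    (hf₁ : ∀ i, IsMildSolution Ω n (v i) (f₁ i) (Q₁ i))
    (hf₂ : ∀ i, IsMildSolution Ω n (v i) (f₂ i) (Q₂ i))
    (hbdry : ∀ i, ∀ᵐ z ∂(volume.restrict Ω), f₁ i (zPlus Ω n (v i) z) = f₂ i (zPlus Ω n (v i) z))
    (hle : ∀ i, ∀ᵐ z ∂(volume.restrict Ω), f₂ i z ≤ f₁ i z)
    (hsum : ∀ᵐ z ∂(volume.restrict Ω),
      ∑ i, (inflowDomain Ω n (v i)).indicator (Q₁ i - Q₂ i) z ≤ 0)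
    (i : ι) : ∀ᵐ z ∂(volume.restrict Ω), f₂ i z = f₁ i z := by
  obtain ⟨n₀, hn₀⟩ := hN
  have hℓ (i : ι) : 0 < innerSL ℝ n₀ (v i) := by
    rw [innerSL_apply_apply, real_inner_comm]
    exact hn₀ i
  let S (i : ι) : E2 → ℝ := (inflowDomain Ω n (v i)).indicator (Q₁ i - Q₂ i)
  have hdiff (i : ι) : ∀ᵐ z ∂(volume.restrict Ω), f₁ i z - f₂ i z = rayIntegral (v i) (S i) z :=
    ae_sub_eq_rayIntegral hΩ hb hconv hn (hℓ i) (hQ₁ i) (hQ₂ i) (hf₁ i) (hf₂ i) (hbdry i)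
  have hS (i : ι) : Integrable fun z => exp (-innerSL ℝ n₀ z) * S i z :=
    integrable_exp_neg_mul_indicator hb (measurableSet_inflowDomain hΩ hn (v i))
      (fun _ hz => hz.1) ((hQ₁ i).sub (hQ₂ i)) (innerSL ℝ n₀)
  have hS0 (i : ι) : ∀ z ∉ Ω, S i z = 0 := fun z hz =>
    indicator_of_notMem (fun hzv => hz hzv.1) _
  have hpos (i : ι) : ∀ᵐ z, z ∈ Ω → 0 ≤ rayIntegral (v i) (S i) z := by
    refine (ae_restrict_iff' hΩ.measurableSet).1 ?_
    filter_upwards [hdiff i, hle i] with z hz hzle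
    exact hz ▸ sub_nonneg.2 hzle
  have hsumS : ∀ᵐ z, ∑ i, S i z ≤ 0 := by
    filter_upwards [(ae_restrict_iff' hΩ.measurableSet).1 hsum] with z hz
    by_cases hzΩ : z ∈ Ω
    · exact hz hzΩ
    · exact (Finset.sum_eq_zero fun i _ => hS0 i z hzΩ).le
  filter_upwards [hdiff i, ae_restrict_of_ae
    (ae_rayIntegral_eq_zero_of_sum_nonpos hΩ hℓ hS hS0 hpos hsumS i)] with z hz hz0
  exact (sub_eq_zero.1 (hz.trans hz0)).symm

end MildSolution

section TruncLoss

lemma trunc_nonneg {k x : ℝ} (hk : 0 ≤ k) (hx : 0 ≤ x) : 0 ≤ trunc k x :=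
  div_nonneg hx (by positivity)

lemma trunc_le {k x : ℝ} (hk : 0 < k) (hx : 0 ≤ x) : trunc k x ≤ k := by
  have hden : 0 < 1 + x / k := by positivity
  rw [trunc, div_le_iff₀ hden, mul_add, mul_div_cancel₀ x hk.ne']
  linarith

lemma trunc_le_trunc {k x y : ℝ} (hk : 0 < k) (hx : 0 ≤ x) (hxy : x ≤ y) :
    trunc k x ≤ trunc k y := by
  have hy : 0 ≤ y := hx.trans hxy
  rw [trunc, trunc, div_le_div_iff₀ (by positivity) (by positivity), mul_add, mul_add,
    mul_one, mul_one, mul_div_left_comm, mul_comm y (x / k), ← mul_div_right_comm]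
  linarith

lemma measurable_trunc (k : ℝ) : Measurable (trunc k) := by
  unfold trunc
  fun_prop

variable {ι : Type*} [Fintype ι] {k : ℝ} {Γ : ι → ι → ι → ι → ℝ}

/-- The loss term of the `i`-th equation, bilinear in the truncations of the density `x` of the
`i`-th species and the densities `y` of its collision partners. -/
def truncLoss (k : ℝ) (Γ : ι → ι → ι → ι → ℝ) (i : ι) (x : ℝ) (y : ι → ℝ) : ℝ :=
  ∑ j, ∑ l, ∑ m, Γ i j l m * (trunc k x * trunc k (y j))

lemma sum_truncLoss_comm (hΓ : ∀ i j l m, Γ i j l m = Γ j i l m) (k : ℝ) (x y : ι → ℝ) :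
    ∑ i, truncLoss k Γ i (x i) y = ∑ i, truncLoss k Γ i (y i) x := by
  simp only [truncLoss]
  rw [Finset.sum_comm]
  refine Finset.sum_congr rfl fun j _ => Finset.sum_congr rfl fun i _ =>
    Finset.sum_congr rfl fun l _ => Finset.sum_congr rfl fun m _ => ?_
  rw [hΓ i j, mul_comm (trunc k (x i))]

lemma truncLoss_le_truncLoss (hΓ : ∀ i j l m, 0 ≤ Γ i j l m) (hk : 0 < k) (i : ι) {x : ℝ}
    (hx : 0 ≤ x) {y y' : ι → ℝ} (hy : ∀ j, 0 ≤ y j) (hyy' : ∀ j, y j ≤ y' j) :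
    truncLoss k Γ i x y ≤ truncLoss k Γ i x y' := by
  refine Finset.sum_le_sum fun j _ => Finset.sum_le_sum fun l _ => Finset.sum_le_sum fun m _ => ?_
  exact mul_le_mul_of_nonneg_left (mul_le_mul_of_nonneg_left
    (trunc_le_trunc hk (hy j) (hyy' j)) (trunc_nonneg hk.le hx)) (hΓ i j l m)

lemma sum_indicator_truncLoss_sub_nonpos (hΓ : ∀ i j l m, 0 ≤ Γ i j l m)
    (hΓ_symm : ∀ i j l m, Γ i j l m = Γ j i l m) (hk : 0 < k) {x y : ι → ℝ} (hx : ∀ i, 0 ≤ x i)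
    (hxy : ∀ i, x i ≤ y i) {s : Set ι} (hs : ∀ i ∉ s, x i = y i) :
    ∑ i, s.indicator (fun i => truncLoss k Γ i (x i) y - truncLoss k Γ i (y i) x) i ≤ 0 := calc
  _ ≤ ∑ i, (truncLoss k Γ i (x i) y - truncLoss k Γ i (y i) x) := by
    refine Finset.sum_le_sum fun i _ => indicator_apply_le' (fun _ => le_rfl) fun hi => ?_
    rw [sub_nonneg, ← hs i hi]
    exact truncLoss_le_truncLoss hΓ hk i (hx i) hx hxy
  _ = 0 := by rw [Finset.sum_sub_distrib, sum_truncLoss_comm hΓ_symm, sub_self]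

lemma integrable_truncLoss {α : Type*} [MeasurableSpace α] {μ : Measure α} [IsFiniteMeasure μ]
    (hk : 0 < k) (i : ι) {a : α → ℝ} {b : ι → α → ℝ} (ha : AEMeasurable a μ)
    (hb : ∀ j, AEMeasurable (b j) μ) (ha0 : ∀ᵐ z ∂μ, 0 ≤ a z) (hb0 : ∀ j, ∀ᵐ z ∂μ, 0 ≤ b j z) :
    Integrable (fun z => truncLoss k Γ i (a z) fun j => b j z) μ := by
  have htrunc {f : α → ℝ} (hf : AEMeasurable f μ) :
      AEStronglyMeasurable (fun z => trunc k (f z)) μ :=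
    ((measurable_trunc k).comp_aemeasurable hf).aestronglyMeasurable
  have hbound {f : α → ℝ} (hf : ∀ᵐ z ∂μ, 0 ≤ f z) : ∀ᵐ z ∂μ, ‖trunc k (f z)‖ ≤ k := by
    filter_upwards [hf] with z hz
    exact (norm_of_nonneg (trunc_nonneg hk.le hz)).trans_le (trunc_le hk hz)
  have hpair (j : ι) : Integrable (fun z => trunc k (a z) * trunc k (b j z)) μ :=
    (Integrable.of_bound (htrunc (hb j)) k (hbound (hb0 j))).bdd_mul (htrunc ha) (hbound ha0)
  exact integrable_finsetSum _ fun j _ => integrable_finsetSum _ fun l _ =>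
    integrable_finsetSum _ fun m _ => (hpair j).const_mul _

end TruncLoss

theorem stmt7_general {ι : Type*} [Fintype ι] {Ω : Set E2} {n : E2 → E2} {v : ι → E2}
    {Γ : ι → ι → ι → ι → ℝ} {k : ℝ} {G g h : ι → E2 → ℝ}
    (hΩ : IsOpen Ω) (hb : Bornology.IsBounded Ω) (hconv : Convex ℝ Ω)
    (hn : ContinuousOn n (frontier Ω)) (hΓ : ∀ i j l m, 0 ≤ Γ i j l m)
    (hΓ_symm : ∀ i j l m, Γ i j l m = Γ j i l m) (hN : ∃ n₀ : E2, ∀ i, 0 < ⟪v i, n₀⟫_ℝ) (hk : 0 < k)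
    (hG : ∀ i, IntegrableOn (G i) Ω) (hg : ∀ i, AEMeasurable (g i) (volume.restrict Ω))
    (hh : ∀ i, AEMeasurable (h i) (volume.restrict Ω))
    (horder : ∀ i, ∀ᵐ z ∂(volume.restrict Ω), 0 ≤ g i z ∧ g i z ≤ h i z)
    (hmildh : ∀ i, IsMildSolution Ω n (v i) (h i)
      fun z => G i z - truncLoss k Γ i (h i z) fun j => g j z)
    (hmildg : ∀ i, IsMildSolution Ω n (v i) (g i)
      fun z => G i z - truncLoss k Γ i (g i z) fun j => h j z)
    (hbdry : ∀ i, ∀ᵐ z ∂(volume.restrict Ω), h i (zPlus Ω n (v i) z) = g i (zPlus Ω n (v i) z))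
    (i : ι) : ∀ᵐ z ∂(volume.restrict Ω), g i z = h i z := by
  have : IsFiniteMeasure ((volume : Measure E2).restrict Ω) :=
    isFiniteMeasure_restrict.2 hb.measure_lt_top.ne
  have hg0 (i : ι) : ∀ᵐ z ∂(volume.restrict Ω), 0 ≤ g i z := (horder i).mono fun _ hz => hz.1
  have hle (i : ι) : ∀ᵐ z ∂(volume.restrict Ω), g i z ≤ h i z := (horder i).mono fun _ hz => hz.2
  have hh0 (i : ι) : ∀ᵐ z ∂(volume.restrict Ω), 0 ≤ h i z :=
    (horder i).mono fun _ hz => hz.1.trans hz.2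
  refine ae_eq_of_isMildSolution_of_sum_nonpos hΩ hb hconv hn hN
    (fun i => (hG i).sub (integrable_truncLoss hk i (hh i) hg (hh0 i) hg0))
    (fun i => (hG i).sub (integrable_truncLoss hk i (hg i) hh (hg0 i) hh0))
    hmildh hmildg hbdry hle ?_ i
  filter_upwards [ae_all_iff.2 horder, ae_all_iff.2 hbdry, ae_restrict_mem hΩ.measurableSet]
    with z hz hzb hzΩ
  have heq (i : ι) (hi : z ∉ inflowDomain Ω n (v i)) : g i z = h i z := by
    simpa only [zPlus_eq_self_of_notMem_inflowDomain hzΩ hi] using (hzb i).symm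
  have hloss := sum_indicator_truncLoss_sub_nonpos hΓ hΓ_symm hk (fun i => (hz i).1)
    (fun i => (hz i).2) (s := {i | z ∈ inflowDomain Ω n (v i)}) heq
  simpa only [indicator, mem_ofPred_eq, Pi.sub_apply, sub_sub_sub_cancel_left] using! hloss

/-- Uniqueness lemma under condition (N): if `0 ≤ g ≤ h` solve the two coupled truncated
transport systems with the same source `G` and equal ingoing boundary values, then `g = h`. -/
theorem stmt7 {p : ℕ} (Ω : Set E2) (n : E2 → E2) (v : Fin p → E2)
    (Γ : Fin p → Fin p → Fin p → Fin p → ℝ)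
    (hΩ : GoodDomain Ω n) (hΓ : GammaOK v Γ) (hN : CondN v)
    (k : ℕ) (hk : 0 < k)
    (G g h : Fin p → E2 → ℝ)
    (hG : ∀ i, L1plus Ω (G i)) (hg : ∀ i, L1plus Ω (g i)) (hh : ∀ i, L1plus Ω (h i))
    (horder : ∀ i, ∀ᵐ z ∂(volume.restrict Ω), 0 ≤ g i z ∧ g i z ≤ h i z)
    (hmildh : ∀ i, ∀ᵐ z ∂(volume.restrict Ω),
      h i z = h i (zPlus Ω n (v i) z) +
        ∫ s in (0:ℝ)..(sPlus Ω n (v i) z),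
          (G i (zPlus Ω n (v i) z + s • v i) -
            ∑ j, ∑ l, ∑ m, Γ i j l m *
              (trunc (k:ℝ) (h i (zPlus Ω n (v i) z + s • v i)) *
               trunc (k:ℝ) (g j (zPlus Ω n (v i) z + s • v i)))))
    (hmildg : ∀ i, ∀ᵐ z ∂(volume.restrict Ω),
      g i z = g i (zPlus Ω n (v i) z) +
        ∫ s in (0:ℝ)..(sPlus Ω n (v i) z),
          (G i (zPlus Ω n (v i) z + s • v i) -
            ∑ j, ∑ l, ∑ m, Γ i j l m *
              (trunc (k:ℝ) (g i (zPlus Ω n (v i) z + s • v i)) *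
               trunc (k:ℝ) (h j (zPlus Ω n (v i) z + s • v i)))))
    (hbdry : ∀ i, ∀ᵐ z ∂(volume.restrict Ω),
      h i (zPlus Ω n (v i) z) = g i (zPlus Ω n (v i) z)) :
    ∀ i, ∀ᵐ z ∂(volume.restrict Ω), g i z = h i z := by
  obtain ⟨hopen, -, hb, hconv, hn, -, -⟩ := hΩ
  exact stmt7_general hopen hb hconv.convex hn hΓ.1 hΓ.2.1 hN (Nat.cast_pos.2 hk)
    (fun i => (hG i).1) (fun i => (hg i).1.1.aemeasurable) (fun i => (hh i).1.1.aemeasurable)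
    horder hmildh hmildg hbdry

end
end

section
/- Let v_1,…,v_p ∈ ℝ² and Γ_{ij}^{lm} ≥ 0 be such that Γ_{ij}^{lm} > 0 implies v_i + v_j = v_l + v_m and |v_i|² + |v_j|² = |v_l|² + |v_m|². Let n_0 ∈ ℝ² be a unit vector and c_0 > max_{1≤i≤p} |v_i| be such that c_0 n_0 ∉ ∪_{1≤i≠j≤p} ( −v_j + ℝ(v_i − v_j) ). Then the shifted velocities w_i = v_i + c_0 n_0, 1 ≤ i ≤ p, satisfy: (a) Γ_{ij}^{lm} > 0 implies w_i + w_j = w_l + w_m and |w_i|² + |w_j|² = |w_l|² + |w_m|²; (b) no two of the w_i, w_j (i ≠ j) are parallel; (c) w_i·n_0 > 0 for all 1 ≤ i ≤ p. -/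
open MeasureTheory Real Set Filter Topology
open scoped InnerProductSpace ENNReal

noncomputable section

/-!
Translating all velocities by the same vector `u` changes the energy of a pair only through its
momentum, so pairs with equal momentum and energy keep this property. Two distinct shifted
velocities `x + u`, `y + u` are parallel precisely when the line through them meets the origin,
i.e. when `u` lies on the line `-y + ℝ (x - y)`. Finally, if `0 < c` and `x` is shorter than
`u = c • n`, then by Cauchy–Schwarz `x` cannot cancel the component of `u` along `n`.
-/

section Line

open AffineMap

variable {K E : Type*} [AddCommGroup E]

theorem zero_mem_line_add_iff [Ring K] [Module K E] {x y u : E} :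
    0 ∈ line[K, x + u, y + u] ↔ ∃ t : K, u = -y + t • (x - y) := by
  rw [mem_affineSpan_pair_iff_exists_lineMap_rev_eq, neg_surjective.exists]
  refine exists_congr fun t => ?_
  calc
    lineMap (y + u) (x + u) (-t) = 0 ↔ -(t • (x - y)) + (y + u) = 0 := by
      rw [lineMap_apply_module', add_sub_add_right_eq_sub, neg_smul]
    _ ↔ u = -y + t • (x - y) := by rw [neg_add_eq_zero, eq_neg_add_iff_add_eq, eq_comm]

variable [DivisionRing K] [Module K E]

theorem linearIndependent_pair_of_zero_notMem_line {x y : E} (hxy : x ≠ y)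
    (h : 0 ∉ line[K, x, y]) : LinearIndependent K ![x, y] := by
  have hx : x ≠ 0 := fun hx => h (hx ▸ left_mem_affineSpan_pair K x y)
  rw [LinearIndependent.pair_iff' hx]
  rintro a rfl
  have ha : a - 1 ≠ 0 := sub_ne_zero.2 fun ha => hxy (by rw [ha, one_smul])
  have hzero : lineMap x (a • x) (-(a - 1)⁻¹) = 0 := by
    rw [lineMap_apply_module', show a • x - x = (a - 1) • x by rw [sub_smul, one_smul], neg_smul,
      inv_smul_smul₀ ha, neg_add_cancel]
  exact h (hzero ▸ lineMap_mem_affineSpan_pair _ _ _)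

theorem linearIndependent_add_pair {x y u : E} (hxy : x ≠ y)
    (hu : ∀ t : K, u ≠ -y + t • (x - y)) : LinearIndependent K ![x + u, y + u] :=
  linearIndependent_pair_of_zero_notMem_line ((add_left_injective u).ne hxy) fun h =>
    (zero_mem_line_add_iff.1 h).elim hu

end Line

section Inner

variable {E : Type*} [NormedAddCommGroup E] [InnerProductSpace ℝ E]

theorem norm_add_sq_add_norm_add_sq (x y u : E) :
    ‖x + u‖ ^ 2 + ‖y + u‖ ^ 2 = ‖x‖ ^ 2 + ‖y‖ ^ 2 + 2 * ⟪x + y, u⟫_ℝ + 2 * ‖u‖ ^ 2 := by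
  rw [norm_add_sq_real, norm_add_sq_real, inner_add_left]
  ring

theorem real_inner_add_smul_self_pos {x n : E} {c : ℝ} (h : ‖x‖ < c * ‖n‖) :
    0 < ⟪x + c • n, n⟫_ℝ := by
  have hn : 0 < ‖n‖ := (norm_nonneg n).lt_of_ne' fun hn =>
    (norm_nonneg x).not_gt (by rwa [hn, mul_zero] at h)
  calc
    0 < (c * ‖n‖ - ‖x‖) * ‖n‖ := mul_pos (sub_pos.2 h) hn
    _ = -(‖x‖ * ‖n‖) + c * ‖n‖ ^ 2 := by ring
    _ ≤ ⟪x, n⟫_ℝ + c * ‖n‖ ^ 2 := by gcongr; exact neg_le_of_abs_le (abs_real_inner_le_norm x n)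
    _ = ⟪x + c • n, n⟫_ℝ := by
      rw [inner_add_left, real_inner_smul_left, real_inner_self_eq_norm_sq]

theorem stmt18_general {ι : Type*} (v : ι → E) (hv : Function.Injective v)
    (Γ : ι → ι → ι → ι → ℝ)
    (hcons : ∀ i j l m, 0 < Γ i j l m →
      v i + v j = v l + v m ∧ ‖v i‖ ^ 2 + ‖v j‖ ^ 2 = ‖v l‖ ^ 2 + ‖v m‖ ^ 2)
    (n : E) (c : ℝ) (hc : ∀ i, ‖v i‖ < c * ‖n‖)
    (hline : ∀ i j, i ≠ j → ∀ t : ℝ, c • n ≠ -v j + t • (v i - v j)) :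
    (∀ i j l m, 0 < Γ i j l m →
      (v i + c • n) + (v j + c • n) = (v l + c • n) + (v m + c • n) ∧
      ‖v i + c • n‖ ^ 2 + ‖v j + c • n‖ ^ 2 = ‖v l + c • n‖ ^ 2 + ‖v m + c • n‖ ^ 2) ∧
    (∀ i j, i ≠ j → LinearIndependent ℝ ![v i + c • n, v j + c • n]) ∧
    (∀ i, 0 < ⟪v i + c • n, n⟫_ℝ) := by
  refine ⟨fun i j l m hΓ => ?_,
    fun i j hij => linearIndependent_add_pair (hv.ne hij) (hline i j hij),
    fun i => real_inner_add_smul_self_pos (hc i)⟩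
  obtain ⟨hmomentum, henergy⟩ := hcons i j l m hΓ
  constructor
  · rw [add_add_add_comm, hmomentum, add_add_add_comm]
  · rw [norm_add_sq_add_norm_add_sq, norm_add_sq_add_norm_add_sq, hmomentum, henergy]

end Inner

/-- Shifting a discrete velocity model by `c₀ n₀`, where `c₀` exceeds all speeds and
`c₀ n₀` avoids the lines `−v_j + ℝ(v_i − v_j)`, preserves the conservation laws and
produces a model satisfying conditions (G) and (N). -/
theorem stmt18 {p : ℕ} (v : Fin p → E2) (hv : Function.Injective v)
    (Γ : Fin p → Fin p → Fin p → Fin p → ℝ)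
    (hcons : ∀ i j l m, 0 < Γ i j l m →
      v i + v j = v l + v m ∧ ‖v i‖ ^ 2 + ‖v j‖ ^ 2 = ‖v l‖ ^ 2 + ‖v m‖ ^ 2)
    (n0 : E2) (hn0 : ‖n0‖ = 1) (c0 : ℝ) (hc0 : ∀ i, ‖v i‖ < c0)
    (hline : ∀ i j, i ≠ j → ∀ t : ℝ, c0 • n0 ≠ -v j + t • (v i - v j)) :
    (∀ i j l m, 0 < Γ i j l m →
      (v i + c0 • n0) + (v j + c0 • n0) = (v l + c0 • n0) + (v m + c0 • n0) ∧
      ‖v i + c0 • n0‖ ^ 2 + ‖v j + c0 • n0‖ ^ 2 =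
        ‖v l + c0 • n0‖ ^ 2 + ‖v m + c0 • n0‖ ^ 2) ∧
    (∀ i j, i ≠ j → LinearIndependent ℝ ![v i + c0 • n0, v j + c0 • n0]) ∧
    (∀ i, 0 < ⟪v i + c0 • n0, n0⟫_ℝ) := by
  exact stmt18_general v hv Γ hcons n0 c0 (by simpa only [hn0, mul_one] using hc0) hline

end
end
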